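/- arXiv:2407.08587 — 2 statements merged into one kernel-verified Lean document; each statement's English description precedes it below -/
import Mathlib

section
/- Let (V_k)_{k∈ℕ} be the value-iteration sequence of the QVAoI status-update MDP with V_0 ≡ 0, and for b ≥ 1 define DV_{k+1}(b,Δ) = V¹[V_k](b,Δ,1) − V⁰[V_k](b,Δ,1). Then for every k ∈ ℕ and every b with 1 ≤ b ≤ b_max, the map Δ ↦ DV_{k+1}(b,Δ) is non-increasing on {0,…,Δ_max}; that is, for all 0 ≤ Δ⁻ ≤ Δ⁺ ≤ Δ_max, DV_{k+1}(b,Δ⁺) ≤ DV_{k+1}(b,Δ⁻). (Hence at each iteration the set of ages at which transmitting is preferred to idling is upward closed, i.e., the greedy policy with respect to V_k has a threshold structure in Δ.) -/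
/-!
STATEMENT 2: For the value-iteration sequence (V_k) of the QVAoI status-update MDP with
V_0 ≡ 0 and `DV_{k+1}(b,Δ) = V¹[V_k](b,Δ,1) − V⁰[V_k](b,Δ,1)` (for b ≥ 1), the map
Δ ↦ DV_{k+1}(b,Δ) is non-increasing on {0,…,Δ_max}.
-/

/-- The idle-action Bellman operand `V⁰[V](b,Δ,r)`. -/
def V0op (β q pt : ℝ) (bmax Δmax : ℕ) (V : ℕ × ℕ × ℕ → ℝ) (b Δ r : ℕ) : ℝ :=
  ∑ z ∈ Finset.range 2, ∑ e ∈ Finset.range 2, ∑ r' ∈ Finset.range 2,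
    (if z = 1 then pt else 1 - pt) * (if e = 1 then β else 1 - β) *
    (if r' = 1 then q else 1 - q) *
    ((r : ℝ) * (min (Δ + z) Δmax : ℕ) + V (min (b + e) bmax, min (Δ + z) Δmax, r'))

/-- The transmit-action Bellman operand `V¹[V](b,Δ,r)` (meaningful for `b ≥ 1`). -/
def V1op (β q pt ps : ℝ) (bmax Δmax : ℕ) (V : ℕ × ℕ × ℕ → ℝ) (b Δ r : ℕ) : ℝ :=
  ∑ z ∈ Finset.range 2, ∑ e ∈ Finset.range 2, ∑ r' ∈ Finset.range 2,
    (if z = 1 then pt else 1 - pt) * (if e = 1 then β else 1 - β) *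
    (if r' = 1 then q else 1 - q) *
    ((1 - ps) * ((r : ℝ) * (min (Δ + z) Δmax : ℕ) + V (b + e - 1, min (Δ + z) Δmax, r'))
      + ps * ((r : ℝ) * (z : ℝ) + V (b + e - 1, z, r')))

/-- The value-iteration sequence: `V_0 ≡ 0` and
`V_{k+1}(s) = min (V⁰[V_k] s) (V¹[V_k] s)` when `b ≥ 1` and `r = 1`,
`V_{k+1}(s) = V⁰[V_k] s` otherwise. -/
def Vit (β q pt ps : ℝ) (bmax Δmax : ℕ) : ℕ → (ℕ × ℕ × ℕ → ℝ)
  | 0 => fun _ => 0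
  | k + 1 => fun s =>
      if 1 ≤ s.1 ∧ s.2.2 = 1 then
        min (V0op β q pt bmax Δmax (Vit β q pt ps bmax Δmax k) s.1 s.2.1 s.2.2)
            (V1op β q pt ps bmax Δmax (Vit β q pt ps bmax Δmax k) s.1 s.2.1 s.2.2)
      else
        V0op β q pt bmax Δmax (Vit β q pt ps bmax Δmax k) s.1 s.2.1 s.2.2

/-- `DV_{k+1}(b,Δ) = V¹[V_k](b,Δ,1) − V⁰[V_k](b,Δ,1)`. -/
def DV (β q pt ps : ℝ) (bmax Δmax : ℕ) (k b Δ : ℕ) : ℝ :=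
  V1op β q pt ps bmax Δmax (Vit β q pt ps bmax Δmax k) b Δ 1
    - V0op β q pt bmax Δmax (Vit β q pt ps bmax Δmax k) b Δ 1

/-!
A transmission spends one unit of energy and resets the age with probability `ps`, so transmitting
from battery level `b + 1` is a mixture of idling from level `b` at the current age and at age `0`:
`V¹(b+1, Δ, r) = (1 - ps) V⁰(b, Δ, r) + ps V⁰(b, 0, r)`. Antitonicity of `DV` at level `b + 1` is
therefore monotonicity in `Δ` of `V⁰(b+1, Δ) - (1 - ps) V⁰(b, Δ)`, and this holds as soon as the
value function `V` itself has the property that `V(b+1, Δ) - (1 - ps) V(b, Δ)` is monotone.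
That property, together with monotonicity of `V` in `Δ`, is preserved by the Bellman operator: in
the query states, writing
`V'(b+1) - (1 - ps) V'(b) = (V'(b+1) - (1 - ps) V⁰(b)) + (1 - ps) (V⁰(b) - V'(b))`
for the new value function `V'`, the first term is the minimum of a monotone function and a
constant; the second is `0` for `b = 0` and otherwise a nonnegative multiple of the positive part of
the monotone function `V⁰(b) - V¹(b)`.
-/

/-- The expectation of `F z e r'` over the independent Bernoulli disturbances of one step: version
change `z`, energy arrival `e` and next query `r'`. It is written with the same nested sums as
`V0op`, so that `V0op` is an instance of it by `rfl`. -/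
def disturbanceMean (β q pt : ℝ) (F : ℕ → ℕ → ℕ → ℝ) : ℝ :=
  ∑ z ∈ Finset.range 2, ∑ e ∈ Finset.range 2, ∑ r' ∈ Finset.range 2,
    (if z = 1 then pt else 1 - pt) * (if e = 1 then β else 1 - β) *
    (if r' = 1 then q else 1 - q) * F z e r'

/-- The invariant of value iteration: at every battery level the value is monotone in the age, and
one additional unit of energy scales its growth in the age by a factor of at least `1 - ps`.
Ages range over all of `ℕ`, which is harmless because `V0op` caps them at `Δmax`. -/
structure AgeRegular (ps : ℝ) (bmax : ℕ) (V : ℕ × ℕ × ℕ → ℝ) : Prop where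
  monotone_age : ∀ b ≤ bmax, ∀ r, Monotone fun Δ => V (b, Δ, r)
  monotone_energy_gap : ∀ b < bmax, ∀ r, Monotone fun Δ => V (b + 1, Δ, r) - (1 - ps) * V (b, Δ, r)

/-- The Bellman optimality operator, whose iterates from `0` are the value-iteration sequence. -/
def bellman (β q pt ps : ℝ) (bmax Δmax : ℕ) (V : ℕ × ℕ × ℕ → ℝ) : ℕ × ℕ × ℕ → ℝ :=
  fun s =>
    if 1 ≤ s.1 ∧ s.2.2 = 1 then
      min (V0op β q pt bmax Δmax V s.1 s.2.1 s.2.2) (V1op β q pt ps bmax Δmax V s.1 s.2.1 s.2.2)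
    else V0op β q pt bmax Δmax V s.1 s.2.1 s.2.2

section

variable {β q pt ps : ℝ} {bmax Δmax : ℕ} {V : ℕ × ℕ × ℕ → ℝ}

lemma monotone_disturbanceMean {α : Type*} [Preorder α]
    (hβ : 0 ≤ β ∧ β ≤ 1) (hq : 0 ≤ q ∧ q ≤ 1) (hpt : 0 ≤ pt ∧ pt ≤ 1)
    {F : α → ℕ → ℕ → ℕ → ℝ} (hF : ∀ z e r', Monotone fun a => F a z e r') :
    Monotone fun a => disturbanceMean β q pt (F a) := by
  have weight_nonneg {x : ℝ} (hx : 0 ≤ x ∧ x ≤ 1) (i : ℕ) : 0 ≤ if i = 1 then x else 1 - x := by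
    split_ifs
    exacts [hx.1, sub_nonneg.2 hx.2]
  intro a a' haa'
  exact Finset.sum_le_sum fun z _ => Finset.sum_le_sum fun e _ => Finset.sum_le_sum fun r' _ =>
    mul_le_mul_of_nonneg_left (hF z e r' haa') <|
      mul_nonneg (mul_nonneg (weight_nonneg hpt z) (weight_nonneg hβ e)) (weight_nonneg hq r')

lemma disturbanceMean_sub_const_mul (c : ℝ) (F G : ℕ → ℕ → ℕ → ℝ) :
    disturbanceMean β q pt F - c * disturbanceMean β q pt G =
      disturbanceMean β q pt fun z e r' => F z e r' - c * G z e r' := by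
  simp only [disturbanceMean, Finset.mul_sum, ← Finset.sum_sub_distrib]
  refine Finset.sum_congr rfl fun z _ => Finset.sum_congr rfl fun e _ =>
    Finset.sum_congr rfl fun r' _ => ?_
  ring

lemma V0op_eq_disturbanceMean (b Δ r : ℕ) :
    V0op β q pt bmax Δmax V b Δ r = disturbanceMean β q pt fun z e r' =>
      (r : ℝ) * (min (Δ + z) Δmax : ℕ) + V (min (b + e) bmax, min (Δ + z) Δmax, r') :=
  rfl

lemma monotone_capped_age (z Δmax : ℕ) : Monotone fun Δ => min (Δ + z) Δmax :=
  fun _ _ h => min_le_min_right _ (Nat.add_le_add_right h z)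

lemma monotone_age_cost (z Δmax r : ℕ) :
    Monotone fun Δ => (r : ℝ) * (min (Δ + z) Δmax : ℕ) :=
  (Nat.mono_cast.comp (monotone_capped_age z Δmax)).const_mul r.cast_nonneg

lemma AgeRegular.monotone_capped_energy_gap (h : AgeRegular ps bmax V) (hps : 0 ≤ ps) (b r : ℕ) :
    Monotone fun Δ => V (min (b + 1) bmax, Δ, r) - (1 - ps) * V (min b bmax, Δ, r) := by
  rcases lt_or_ge b bmax with hb | hb
  · simpa only [min_eq_left hb.le, min_eq_left (Nat.succ_le_of_lt hb)] using
      h.monotone_energy_gap b hb r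
  · have gap_eq (Δ : ℕ) : V (bmax, Δ, r) - (1 - ps) * V (bmax, Δ, r) = ps * V (bmax, Δ, r) := by
      ring
    simpa only [min_eq_right hb, min_eq_right (Nat.le_succ_of_le hb), gap_eq] using
      (h.monotone_age bmax le_rfl r).const_mul hps

lemma AgeRegular.monotone_V0op (h : AgeRegular ps bmax V)
    (hβ : 0 ≤ β ∧ β ≤ 1) (hq : 0 ≤ q ∧ q ≤ 1) (hpt : 0 ≤ pt ∧ pt ≤ 1) (b r : ℕ) :
    Monotone fun Δ => V0op β q pt bmax Δmax V b Δ r :=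
  monotone_disturbanceMean hβ hq hpt fun z _ r' =>
    (monotone_age_cost z Δmax r).add <|
      (h.monotone_age _ (min_le_right _ _) r').comp (monotone_capped_age z Δmax)

lemma AgeRegular.monotone_V0op_energy_gap (h : AgeRegular ps bmax V)
    (hβ : 0 ≤ β ∧ β ≤ 1) (hq : 0 ≤ q ∧ q ≤ 1) (hpt : 0 ≤ pt ∧ pt ≤ 1) (hps : 0 ≤ ps) (b r : ℕ) :
    Monotone fun Δ => V0op β q pt bmax Δmax V (b + 1) Δ r
      - (1 - ps) * V0op β q pt bmax Δmax V b Δ r := by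
  simp only [V0op_eq_disturbanceMean, disturbanceMean_sub_const_mul]
  refine monotone_disturbanceMean hβ hq hpt fun z e r' => ?_
  have hcost := (monotone_age_cost z Δmax r).const_mul hps
  have hgap := (h.monotone_capped_energy_gap hps (b + e) r').comp (monotone_capped_age z Δmax)
  convert hcost.add hgap using 2 with Δ
  rw [Function.comp_apply, Nat.add_right_comm b 1 e]
  ring

lemma V1op_succ (hΔmax : 1 ≤ Δmax) {b : ℕ} (hb : b < bmax) (Δ r : ℕ) :
    V1op β q pt ps bmax Δmax V (b + 1) Δ r =
      (1 - ps) * V0op β q pt bmax Δmax V b Δ r + ps * V0op β q pt bmax Δmax V b 0 r := by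
  simp only [V1op, V0op, Finset.mul_sum, ← Finset.sum_add_distrib]
  refine Finset.sum_congr rfl fun z hz => Finset.sum_congr rfl fun e he =>
    Finset.sum_congr rfl fun r' _ => ?_
  rw [Finset.mem_range] at hz he
  have age_reset : min (0 + z) Δmax = z := by omega
  have battery_uncapped : min (b + e) bmax = b + e := by omega
  have battery_after : b + 1 + e - 1 = b + e := by omega
  rw [age_reset, battery_uncapped, battery_after]
  ring

lemma AgeRegular.monotone_V0op_sub_V1op (h : AgeRegular ps bmax V)
    (hβ : 0 ≤ β ∧ β ≤ 1) (hq : 0 ≤ q ∧ q ≤ 1) (hpt : 0 ≤ pt ∧ pt ≤ 1) (hps : 0 ≤ ps)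
    (hΔmax : 1 ≤ Δmax) {b : ℕ} (hb : b < bmax) (r : ℕ) :
    Monotone fun Δ => V0op β q pt bmax Δmax V (b + 1) Δ r
      - V1op β q pt ps bmax Δmax V (b + 1) Δ r := by
  simp only [V1op_succ hΔmax hb, ← sub_sub, sub_eq_add_neg _ (ps * _)]
  exact (h.monotone_V0op_energy_gap hβ hq hpt hps b r).add_const _

lemma bellman_zero (Δ r : ℕ) :
    bellman β q pt ps bmax Δmax V (0, Δ, r) = V0op β q pt bmax Δmax V 0 Δ r :=
  if_neg fun h => Nat.not_succ_le_zero 0 h.1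

lemma bellman_of_ne_one {r : ℕ} (hr : r ≠ 1) (b Δ : ℕ) :
    bellman β q pt ps bmax Δmax V (b, Δ, r) = V0op β q pt bmax Δmax V b Δ r :=
  if_neg fun h => hr h.2

lemma bellman_succ_one (b Δ : ℕ) :
    bellman β q pt ps bmax Δmax V (b + 1, Δ, 1) =
      min (V0op β q pt bmax Δmax V (b + 1) Δ 1) (V1op β q pt ps bmax Δmax V (b + 1) Δ 1) :=
  if_pos ⟨Nat.succ_pos b, rfl⟩

lemma AgeRegular.monotone_V0op_sub_bellman (h : AgeRegular ps bmax V)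
    (hβ : 0 ≤ β ∧ β ≤ 1) (hq : 0 ≤ q ∧ q ≤ 1) (hpt : 0 ≤ pt ∧ pt ≤ 1) (hps : 0 ≤ ps)
    (hΔmax : 1 ≤ Δmax) {b : ℕ} (hb : b ≤ bmax) :
    Monotone fun Δ => V0op β q pt bmax Δmax V b Δ 1
      - bellman β q pt ps bmax Δmax V (b, Δ, 1) := by
  cases b with
  | zero => simpa only [bellman_zero, sub_self] using monotone_const
  | succ b =>
    simp only [bellman_succ_one, ← max_sub_sub_left, sub_self]
    exact monotone_const.max (h.monotone_V0op_sub_V1op hβ hq hpt hps hΔmax hb 1)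

lemma AgeRegular.monotone_bellman_succ_sub_V0op (h : AgeRegular ps bmax V)
    (hβ : 0 ≤ β ∧ β ≤ 1) (hq : 0 ≤ q ∧ q ≤ 1) (hpt : 0 ≤ pt ∧ pt ≤ 1) (hps : 0 ≤ ps)
    (hΔmax : 1 ≤ Δmax) {b : ℕ} (hb : b < bmax) :
    Monotone fun Δ => bellman β q pt ps bmax Δmax V (b + 1, Δ, 1)
      - (1 - ps) * V0op β q pt bmax Δmax V b Δ 1 := by
  simp only [bellman_succ_one, V1op_succ hΔmax hb, ← min_sub_sub_right, add_sub_cancel_left]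
  exact (h.monotone_V0op_energy_gap hβ hq hpt hps b 1).min monotone_const

lemma AgeRegular.monotone_bellman (h : AgeRegular ps bmax V)
    (hβ : 0 ≤ β ∧ β ≤ 1) (hq : 0 ≤ q ∧ q ≤ 1) (hpt : 0 ≤ pt ∧ pt ≤ 1) (hps : ps ≤ 1)
    (hΔmax : 1 ≤ Δmax) {b : ℕ} (hb : b ≤ bmax) (r : ℕ) :
    Monotone fun Δ => bellman β q pt ps bmax Δmax V (b, Δ, r) := by
  rcases ne_or_eq r 1 with hr | rfl
  · simpa only [bellman_of_ne_one hr] using h.monotone_V0op hβ hq hpt b r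
  cases b with
  | zero => simpa only [bellman_zero] using h.monotone_V0op hβ hq hpt 0 1
  | succ b =>
    simp only [bellman_succ_one, V1op_succ hΔmax hb]
    exact (h.monotone_V0op hβ hq hpt (b + 1) 1).min <|
      ((h.monotone_V0op hβ hq hpt b 1).const_mul (sub_nonneg.2 hps)).add_const _

lemma AgeRegular.monotone_bellman_energy_gap (h : AgeRegular ps bmax V)
    (hβ : 0 ≤ β ∧ β ≤ 1) (hq : 0 ≤ q ∧ q ≤ 1) (hpt : 0 ≤ pt ∧ pt ≤ 1) (hps : 0 ≤ ps ∧ ps ≤ 1)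
    (hΔmax : 1 ≤ Δmax) {b : ℕ} (hb : b < bmax) (r : ℕ) :
    Monotone fun Δ => bellman β q pt ps bmax Δmax V (b + 1, Δ, r)
      - (1 - ps) * bellman β q pt ps bmax Δmax V (b, Δ, r) := by
  rcases ne_or_eq r 1 with hr | rfl
  · simpa only [bellman_of_ne_one hr] using h.monotone_V0op_energy_gap hβ hq hpt hps.1 b r
  have hidle := h.monotone_bellman_succ_sub_V0op hβ hq hpt hps.1 hΔmax hb
  have hregret := (h.monotone_V0op_sub_bellman hβ hq hpt hps.1 hΔmax hb.le).const_mul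
    (sub_nonneg.2 hps.2)
  convert hidle.add hregret using 2
  ring

lemma AgeRegular.bellman (h : AgeRegular ps bmax V)
    (hβ : 0 ≤ β ∧ β ≤ 1) (hq : 0 ≤ q ∧ q ≤ 1) (hpt : 0 ≤ pt ∧ pt ≤ 1) (hps : 0 ≤ ps ∧ ps ≤ 1)
    (hΔmax : 1 ≤ Δmax) : AgeRegular ps bmax (bellman β q pt ps bmax Δmax V) where
  monotone_age _ hb := h.monotone_bellman hβ hq hpt hps.2 hΔmax hb
  monotone_energy_gap _ hb := h.monotone_bellman_energy_gap hβ hq hpt hps hΔmax hb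

lemma ageRegular_zero : AgeRegular ps bmax fun _ => 0 where
  monotone_age _ _ _ := monotone_const
  monotone_energy_gap _ _ _ := monotone_const

lemma ageRegular_Vit
    (hβ : 0 ≤ β ∧ β ≤ 1) (hq : 0 ≤ q ∧ q ≤ 1) (hpt : 0 ≤ pt ∧ pt ≤ 1) (hps : 0 ≤ ps ∧ ps ≤ 1)
    (hΔmax : 1 ≤ Δmax) (k : ℕ) : AgeRegular ps bmax (Vit β q pt ps bmax Δmax k) := by
  induction k with
  | zero => exact ageRegular_zero
  | succ k ih => exact ih.bellman hβ hq hpt hps hΔmax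

end

theorem DV_antitone_in_age
    (bmax Δmax : ℕ) (hbmax : 1 ≤ bmax) (hΔmax : 1 ≤ Δmax)
    (β q pt ps : ℝ)
    (hβ : 0 ≤ β ∧ β ≤ 1) (hq : 0 ≤ q ∧ q ≤ 1)
    (hpt : 0 ≤ pt ∧ pt ≤ 1) (hps : 0 ≤ ps ∧ ps ≤ 1) :
    ∀ (k b Δm Δp : ℕ), 1 ≤ b → b ≤ bmax → Δm ≤ Δp → Δp ≤ Δmax →
      DV β q pt ps bmax Δmax k b Δp ≤ DV β q pt ps bmax Δmax k b Δm := by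
  intro k b Δm Δp hb hbb hΔ _
  obtain ⟨n, rfl⟩ := Nat.exists_eq_add_of_le' hb
  have hmono := (ageRegular_Vit hβ hq hpt hps hΔmax k).monotone_V0op_sub_V1op
    hβ hq hpt hps.1 hΔmax hbb 1
  simpa only [DV, neg_sub] using neg_le_neg (hmono hΔ)
end

section
/- Let μ be a stationary distribution of the single-battery QVAoI Markov chain with threshold Δ_T = 1, and assume additionally that the weighted series Σ_{Δ=0}^{∞} Δ·μ(0,Δ) and Σ_{Δ=0}^{∞} Δ·μ(1,Δ) converge. Then the average QVAoI equals Σ_{b∈{0,1}} Σ_{Δ=0}^{∞} Δ·μ(b,Δ) = (p_t/β) · ( 1 − (p̄_t·β̄·β²)/(β² + p_t·β̄·(p_t + β)) ). -/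
/-- A stationary distribution of the single-battery QVAoI Markov chain with threshold
`Δ_T = 1`, given as the pair of functions `μ0 Δ = μ(0,Δ)` and `μ1 Δ = μ(1,Δ)`.
Here `γ00 = (1−p_t)(1−β)`, `γ01 = (1−p_t)β`, `γ10 = p_t(1−β)`, `γ11 = p_t β`, and
`S = Σ_{δ=1}^∞ μ(1,δ)`, written below as `∑' δ, μ1 (δ + 1)`. -/
structure IsStationaryT1 (pt β : ℝ) (μ0 μ1 : ℕ → ℝ) : Prop where
  nonneg0 : ∀ Δ, 0 ≤ μ0 Δ
  nonneg1 : ∀ Δ, 0 ≤ μ1 Δ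
  summable0 : Summable μ0
  summable1 : Summable μ1
  total : (∑' Δ, μ0 Δ) + (∑' Δ, μ1 Δ) = 1
  bal00 : μ0 0 = (1 - pt) * (1 - β) * μ0 0
      + (1 - pt) * (1 - β) * (∑' δ, μ1 (δ + 1))
  bal01 : μ0 1 = pt * (1 - β) * μ0 0 + (1 - pt) * (1 - β) * μ0 1
      + pt * (1 - β) * (∑' δ, μ1 (δ + 1))
  bal0  : ∀ Δ, 2 ≤ Δ → μ0 Δ = (1 - pt) * (1 - β) * μ0 Δ + pt * (1 - β) * μ0 (Δ - 1)
  bal10 : μ1 0 = (1 - pt) * β * μ0 0 + (1 - pt) * μ1 0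
      + (1 - pt) * β * (∑' δ, μ1 (δ + 1))
  bal11 : μ1 1 = pt * β * μ0 0 + (1 - pt) * β * μ0 1 + pt * μ1 0
      + pt * β * (∑' δ, μ1 (δ + 1))
  bal1  : ∀ Δ, 2 ≤ Δ → μ1 Δ = pt * β * μ0 (Δ - 1) + (1 - pt) * β * μ0 Δ

/-!
Every state `(1, δ)` with `δ ≥ 1` has the same outgoing transitions as `(0, 0)`, so the chain sees
these states only through their joint mass `u`. At the ages `Δ ≥ 1` with an empty battery the only
inflow besides waiting comes from the previous age, whence `μ(0, Δ) = u * r ^ Δ` with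
`r = γ10 / (1 - γ00)`, and `μ(1, Δ)` is geometric as well, up to an extra term at `Δ = 1` fed by
`(1, 0)`. Thus both mean ages are `u` times explicit arithmetico-geometric sums, and `u` is fixed
by the total mass.
-/

section

variable {pt β : ℝ} {μ0 μ1 : ℕ → ℝ}

/-- The probability `1 - γ00` of leaving a state `(0, Δ)` with `Δ ≥ 1` in one slot. -/
noncomputable def exitProb (pt β : ℝ) : ℝ := 1 - (1 - pt) * (1 - β)

/-- The ratio `γ10 / (1 - γ00)`: the probability that the chain, when it leaves `(0, Δ)` with
`Δ ≥ 1`, does so towards `(0, Δ + 1)`. It is the common ratio of the stationary distribution. -/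
noncomputable def climbRatio (pt β : ℝ) : ℝ := pt * (1 - β) / exitProb pt β

/-- The mass of `(0, 0)` together with all `(1, δ)`, `δ ≥ 1`, the states whose outgoing
transitions are those of `(0, 0)`. -/
noncomputable def resetMass (μ0 μ1 : ℕ → ℝ) : ℝ := μ0 0 + ∑' δ, μ1 (δ + 1)

theorem exitProb_pos (hpt : 0 ≤ pt) (hβ : 0 < β) (hβ' : β ≤ 1) : 0 < exitProb pt β := by
  have hq : 0 ≤ pt * (1 - β) := mul_nonneg hpt (sub_nonneg.2 hβ')
  unfold exitProb
  linarith

theorem one_sub_climbRatio (he : exitProb pt β ≠ 0) : 1 - climbRatio pt β = β / exitProb pt β := by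
  rw [climbRatio, one_sub_div he, exitProb]
  ring

theorem climbRatio_nonneg (hpt : 0 ≤ pt) (hβ : 0 < β) (hβ' : β ≤ 1) : 0 ≤ climbRatio pt β :=
  div_nonneg (mul_nonneg hpt (sub_nonneg.2 hβ')) (exitProb_pos hpt hβ hβ').le

theorem norm_climbRatio_lt_one (hpt : 0 ≤ pt) (hβ : 0 < β) (hβ' : β ≤ 1) :
    ‖climbRatio pt β‖ < 1 := by
  have he := exitProb_pos hpt hβ hβ'
  have hgap : 0 < 1 - climbRatio pt β := by
    rw [one_sub_climbRatio he.ne']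
    exact div_pos hβ he
  rw [Real.norm_of_nonneg (climbRatio_nonneg hpt hβ hβ')]
  exact sub_pos.1 hgap

theorem resetMass_denom_pos (hpt : 0 ≤ pt) (hβ : 0 < β) (hβ' : β ≤ 1) :
    0 < β ^ 2 + pt * (1 - β) * (pt + β) :=
  add_pos_of_pos_of_nonneg (pow_pos hβ 2)
    (mul_nonneg (mul_nonneg hpt (sub_nonneg.2 hβ')) (add_nonneg hpt hβ.le))

theorem hasSum_succ_mul_geometric {𝕜 : Type*} [NormedDivisionRing 𝕜] [HasSummableGeomSeries 𝕜]
    {r : 𝕜} (hr : ‖r‖ < 1) : HasSum (fun n : ℕ ↦ ((n : 𝕜) + 1) * r ^ n) (1 / (1 - r) ^ 2) := by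
  simpa using hasSum_choose_mul_geometric_of_norm_lt_one 1 hr

namespace IsStationaryT1

theorem exitProb_mul_μ0_one (hμ : IsStationaryT1 pt β μ0 μ1) :
    exitProb pt β * μ0 1 = pt * (1 - β) * resetMass μ0 μ1 := by
  unfold exitProb resetMass
  linear_combination hμ.bal01

theorem exitProb_mul_μ0_add_two (hμ : IsStationaryT1 pt β μ0 μ1) (n : ℕ) :
    exitProb pt β * μ0 (n + 2) = pt * (1 - β) * μ0 (n + 1) := by
  have hbal := hμ.bal0 (n + 2) (Nat.le_add_left 2 n)
  rw [Nat.add_succ_sub_one] at hbal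
  unfold exitProb
  linear_combination hbal

theorem μ0_succ (hμ : IsStationaryT1 pt β μ0 μ1) (he : exitProb pt β ≠ 0) (n : ℕ) :
    μ0 (n + 1) = resetMass μ0 μ1 * climbRatio pt β ^ (n + 1) := by
  induction n with
  | zero =>
    rw [zero_add, pow_one, climbRatio, mul_div_assoc', eq_div_iff he]
    linear_combination hμ.exitProb_mul_μ0_one
  | succ n ih =>
    rw [pow_succ, ← mul_assoc, ← ih, climbRatio, mul_div_assoc', eq_div_iff he]
    linear_combination hμ.exitProb_mul_μ0_add_two n

theorem pt_mul_μ1_zero (hμ : IsStationaryT1 pt β μ0 μ1) :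
    pt * μ1 0 = (1 - pt) * β * resetMass μ0 μ1 := by
  unfold resetMass
  linear_combination hμ.bal10

theorem μ1_succ (hμ : IsStationaryT1 pt β μ0 μ1) (he : exitProb pt β ≠ 0) (n : ℕ) :
    μ1 (n + 1) = (if n = 0 then (1 - pt) * β * resetMass μ0 μ1 else 0)
      + pt * β / exitProb pt β * resetMass μ0 μ1 * climbRatio pt β ^ n := by
  have hcoeff : pt * β / exitProb pt β = pt * β + (1 - pt) * β * climbRatio pt β := by
    rw [climbRatio]
    field_simp
    rw [exitProb]
    ring
  rw [hcoeff]
  cases n with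
  | zero =>
    have hreset : μ0 0 + ∑' δ, μ1 (δ + 1) = resetMass μ0 μ1 := rfl
    rw [if_pos rfl]
    linear_combination hμ.bal11 + hμ.pt_mul_μ1_zero + (1 - pt) * β * hμ.μ0_succ he 0
      + pt * β * hreset
  | succ k =>
    have hbal := hμ.bal1 (k + 2) (Nat.le_add_left 2 k)
    rw [Nat.add_succ_sub_one] at hbal
    rw [if_neg k.succ_ne_zero]
    linear_combination hbal + pt * β * hμ.μ0_succ he k + (1 - pt) * β * hμ.μ0_succ he (k + 1)

theorem hasSum_μ0_succ (hμ : IsStationaryT1 pt β μ0 μ1) (hpt : 0 ≤ pt) (hβ : 0 < β)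
    (hβ' : β ≤ 1) :
    HasSum (fun n ↦ μ0 (n + 1)) (resetMass μ0 μ1 * (pt * (1 - β) / β)) := by
  have he := (exitProb_pos hpt hβ hβ').ne'
  have hgeom := ((hasSum_geometric_of_norm_lt_one (norm_climbRatio_lt_one hpt hβ hβ')).mul_left
    (climbRatio pt β)).mul_left (resetMass μ0 μ1)
  have hvalue : climbRatio pt β * (1 - climbRatio pt β)⁻¹ = pt * (1 - β) / β := by
    rw [one_sub_climbRatio he, climbRatio]
    field_simp
  rw [hvalue] at hgeom
  simpa only [hμ.μ0_succ he, pow_succ'] using hgeom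

theorem resetMass_eq (hμ : IsStationaryT1 pt β μ0 μ1) (hpt : 0 ≤ pt) (hβ : 0 < β)
    (hβ' : β ≤ 1) :
    resetMass μ0 μ1 = pt * β / (β ^ 2 + pt * (1 - β) * (pt + β)) := by
  have htotal : resetMass μ0 μ1 * (1 + pt * (1 - β) / β) + μ1 0 = 1 := by
    have h := hμ.total
    rw [hμ.summable0.tsum_eq_zero_add, hμ.summable1.tsum_eq_zero_add,
      (hμ.hasSum_μ0_succ hpt hβ hβ').tsum_eq] at h
    unfold resetMass at h ⊢
    linear_combination h
  field_simp at htotal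
  rw [eq_div_iff (resetMass_denom_pos hpt hβ hβ').ne']
  linear_combination pt * htotal - β * hμ.pt_mul_μ1_zero

theorem hasSum_mul_μ0 (hμ : IsStationaryT1 pt β μ0 μ1) (hpt : 0 ≤ pt) (hβ : 0 < β)
    (hβ' : β ≤ 1) :
    HasSum (fun Δ : ℕ ↦ (Δ : ℝ) * μ0 Δ)
      (resetMass μ0 μ1 * (pt * (1 - β) * exitProb pt β / β ^ 2)) := by
  have he := (exitProb_pos hpt hβ hβ').ne'
  have hvalue : climbRatio pt β / (1 - climbRatio pt β) ^ 2
      = pt * (1 - β) * exitProb pt β / β ^ 2 := by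
    rw [one_sub_climbRatio he, climbRatio]
    field_simp
  rw [← hvalue]
  refine ((hasSum_coe_mul_geometric_of_norm_lt_one
    (norm_climbRatio_lt_one hpt hβ hβ')).mul_left (resetMass μ0 μ1)).congr_fun ?_
  rintro (_ | n)
  · simp
  · rw [hμ.μ0_succ he, mul_left_comm]

theorem hasSum_mul_μ1 (hμ : IsStationaryT1 pt β μ0 μ1) (hpt : 0 ≤ pt) (hβ : 0 < β)
    (hβ' : β ≤ 1) :
    HasSum (fun Δ : ℕ ↦ (Δ : ℝ) * μ1 Δ)
      (resetMass μ0 μ1 * ((1 - pt) * β + pt * exitProb pt β / β)) := by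
  have he := (exitProb_pos hpt hβ hβ').ne'
  have hatom := hasSum_ite_eq 0 ((1 - pt) * β * resetMass μ0 μ1)
  have hgeom := (hasSum_succ_mul_geometric (norm_climbRatio_lt_one hpt hβ hβ')).mul_left
    (pt * β / exitProb pt β * resetMass μ0 μ1)
  have hvalue : (1 - pt) * β * resetMass μ0 μ1
        + pt * β / exitProb pt β * resetMass μ0 μ1 * (1 / (1 - climbRatio pt β) ^ 2)
      = resetMass μ0 μ1 * ((1 - pt) * β + pt * exitProb pt β / β) := by
    rw [one_sub_climbRatio he]
    field_simp
  rw [← hvalue, ← hasSum_nat_add_iff' 1, Finset.sum_range_one, Nat.cast_zero, zero_mul, sub_zero]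
  refine (hatom.add hgeom).congr_fun fun n ↦ ?_
  rw [hμ.μ1_succ he, Nat.cast_succ]
  obtain rfl | hn := eq_or_ne n 0
  · simp
  · rw [if_neg hn]
    ring

end IsStationaryT1

end

theorem stationary_T1_average_QVAoI_general {pt β : ℝ} (hpt : 0 ≤ pt) (hβ : 0 < β) (hβ' : β ≤ 1)
    {μ0 μ1 : ℕ → ℝ} (hμ : IsStationaryT1 pt β μ0 μ1) :
    HasSum (fun Δ : ℕ ↦ (Δ : ℝ) * μ0 Δ + (Δ : ℝ) * μ1 Δ)
      ((pt / β) * (1 - ((1 - pt) * (1 - β) * β ^ 2)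
        / (β ^ 2 + pt * (1 - β) * (pt + β)))) := by
  have hD := (resetMass_denom_pos hpt hβ hβ').ne'
  convert (hμ.hasSum_mul_μ0 hpt hβ hβ').add (hμ.hasSum_mul_μ1 hpt hβ hβ') using 1
  rw [hμ.resetMass_eq hpt hβ hβ', exitProb]
  field_simp
  ring

/-- the average QVAoI of the threshold-1 chain equals
`(p_t/β)·(1 − p̄_t·β̄·β²/(β² + p_t·β̄·(p_t + β)))`. -/
theorem stationary_T1_average_QVAoI
    (pt β : ℝ) (hpt : 0 < pt ∧ pt < 1) (hβ : 0 < β ∧ β < 1)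
    (μ0 μ1 : ℕ → ℝ) (hμ : IsStationaryT1 pt β μ0 μ1)
    (hw0 : Summable (fun Δ : ℕ => (Δ : ℝ) * μ0 Δ))
    (hw1 : Summable (fun Δ : ℕ => (Δ : ℝ) * μ1 Δ)) :
    (∑' Δ : ℕ, (Δ : ℝ) * μ0 Δ) + (∑' Δ : ℕ, (Δ : ℝ) * μ1 Δ)
      = (pt / β) * (1 - ((1 - pt) * (1 - β) * β ^ 2)
          / (β ^ 2 + pt * (1 - β) * (pt + β))) := by
  rw [← hw0.tsum_add hw1]
  exact (stationary_T1_average_QVAoI_general hpt.1.le hβ.1 hβ.2.le hμ).tsum_eq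
end
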